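/- Suppose a subshift (X, σ) satisfies limsup_{n→∞} P_X(n)/n < k, and suppose (X, σ) has a generic measure μ with a generic point x_μ whose orbit closure is not uniquely ergodic. Then (X, σ) has at most k−2 distinct nonatomic generic measures. -/

import Mathlib

open MeasureTheory Filter
open scoped ENNReal

/-- The left shift on bi-infinite sequences. -/
def shift {A : Type*} (x : ℤ → A) : ℤ → A := fun n => x (n + 1)

/-- A subshift: a closed, shift-invariant subset of `A^ℤ`. -/
def IsSubshift {A : Type*} [TopologicalSpace A] (X : Set (ℤ → A)) : Prop :=
  IsClosed X ∧ shift '' X = X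

/-- The word complexity `P_X(n)`: the number of words of length `n` occurring in `X`. -/
noncomputable def complexity {A : Type*} (X : Set (ℤ → A)) (n : ℕ) : ℕ :=
  Nat.card {w : Fin n → A // ∃ x ∈ X, ∃ m : ℤ, ∀ t : Fin n, x (m + (t : ℕ)) = w t}

/-- `x` is a generic point for the measure `μ`. -/
def IsGenericPt {A : Type*} [TopologicalSpace A] [MeasurableSpace A]
    (μ : Measure (ℤ → A)) (x : ℤ → A) : Prop :=
  ∀ f : (ℤ → A) → ℝ, Continuous f →
    Tendsto (fun N : ℕ => (∑ n ∈ Finset.range N, f (shift^[n] x)) / (N : ℝ))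
      atTop (nhds (∫ y, f y ∂μ))

/-- A generic measure on the subshift `X`: a Borel probability measure carried by `X`
possessing a generic point in `X`. -/
def GenericMeasureOn {A : Type*} [TopologicalSpace A] [MeasurableSpace A]
    (X : Set (ℤ → A)) (μ : Measure (ℤ → A)) : Prop :=
  IsProbabilityMeasure μ ∧ μ X = 1 ∧ ∃ x ∈ X, IsGenericPt μ x

/-- The (two-sided) orbit closure of a point. -/
def orbitClosure {A : Type*} [TopologicalSpace A] (x : ℤ → A) : Set (ℤ → A) :=
  closure {y | ∃ k : ℤ, y = fun n => x (n + k)}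

/-- A set `Y` is uniquely ergodic if it carries exactly one shift-invariant Borel
probability measure. -/
def UniquelyErgodicOn {A : Type*} [TopologicalSpace A] [MeasurableSpace A]
    (Y : Set (ℤ → A)) : Prop :=
  ∃! μ : Measure (ℤ → A), IsProbabilityMeasure μ ∧ μ.map shift = μ ∧ μ Y = 1

section Combinatorics

lemma fib {E V : Type*} [Finite E] [Finite V] (π : E → V) (hπ : Function.Surjective π) (m : ℕ)
    (hc : Nat.card E ≤ Nat.card V + m) (v : Fin m → V) (hv : Function.Injective v)
    (e e' : Fin m → E) (he : ∀ i, π (e i) = v i) (he' : ∀ i, π (e' i) = v i)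
    (hne : ∀ i, e i ≠ e' i) :
    (∀ f f', π f = π f' → f ≠ f' → ∃ i, v i = π f) ∧
    (∀ f g h, π f = π g → π f = π h → f = g ∨ f = h ∨ g = h) := by
  classical
  obtain ⟨sec, hsec⟩ := hπ.hasRightInverse
  have hsi : Function.Injective sec := hsec.injective
  have key : ∀ f f', π f = π f' → f ≠ f' → f ∉ Set.range sec ∨ f' ∉ Set.range sec := by
    intro f f' h hn
    by_contra hcon
    push Not at hcon
    obtain ⟨⟨a, rfl⟩, ⟨b, rfl⟩⟩ := hcon
    rw [hsec a, hsec b] at h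
    exact hn (by rw [h])
  have hd : ∀ i, ∃ d, d ∉ Set.range sec ∧ π d = v i := by
    intro i
    rcases key _ _ ((he i).trans (he' i).symm) (hne i) with h | h
    · exact ⟨_, h, he i⟩
    · exact ⟨_, h, he' i⟩
  choose d hd1 hd2 using hd
  have hdi : Function.Injective d := by
    intro i j h
    apply hv
    rw [← hd2, ← hd2, h]
  have hcard : (Set.range sec)ᶜ.ncard ≤ m := by
    have h1 := Set.ncard_add_ncard_compl (Set.range sec)
    have h2 : (Set.range sec).ncard = Nat.card V := by
      rw [← Nat.card_coe_set_eq, Nat.card_range_of_injective hsi]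
    omega
  have hrd : (Set.range d).ncard = m := by
    rw [← Nat.card_coe_set_eq, Nat.card_range_of_injective hdi]; simp
  have hsub : Set.range d ⊆ (Set.range sec)ᶜ := by
    rintro _ ⟨i, rfl⟩; exact hd1 i
  have heq : Set.range d = (Set.range sec)ᶜ :=
    Set.eq_of_subset_of_ncard_le hsub (by omega) (Set.toFinite _)
  have hex : ∀ f, f ∉ Set.range sec → ∃ i, d i = f := by
    intro f hf
    have : f ∈ (Set.range sec)ᶜ := hf
    rw [← heq] at this
    exact this
  have two : ∀ f g, π f = π g → f ∉ Set.range sec → g ∉ Set.range sec → f = g := by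
    intro f g h hf hg
    obtain ⟨i, rfl⟩ := hex f hf
    obtain ⟨j, rfl⟩ := hex g hg
    rw [hd2, hd2] at h
    rw [hv h]
  constructor
  · intro f f' h hn
    rcases key f f' h hn with h1 | h1
    · obtain ⟨i, rfl⟩ := hex f h1
      exact ⟨i, (hd2 i).symm⟩
    · obtain ⟨i, rfl⟩ := hex f' h1
      exact ⟨i, by rw [h, hd2 i]⟩
  · intro f g h h1 h2
    by_contra hcon
    push Not at hcon
    obtain ⟨a, b, c⟩ := hcon
    have t1 := key f g h1 a
    have t2 := key f h h2 b
    have t3 := key g h (h1.symm.trans h2) c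
    have s1 := two f g h1
    have s2 := two f h h2
    have s3 := two g h (h1.symm.trans h2)
    tauto

lemma abs1 {V : Type*} (W : ℕ → V) (Q : ℕ)
    (hpig : ∃ s t, s < t ∧ t ≤ Q ∧ W s = W t)
    (hdet : ∀ a ≤ Q, ∀ b, W a = W b → W (a + 1) = W (b + 1)) :
    ∃ p, 1 ≤ p ∧ p ≤ Q ∧ ∀ j, Q ≤ j → W (j + p) = W j := by
  obtain ⟨s, t, hst, htQ, h⟩ := hpig
  have key : ∀ j, ∃ a, a < t ∧ W (s + j) = W a ∧ W (t + j) = W a := by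
    intro j
    induction j with
    | zero => exact ⟨s, hst, rfl, h.symm⟩
    | succ j ih =>
      obtain ⟨a, ha, h1, h2⟩ := ih
      have e1 := hdet a (by omega) _ h1.symm
      have e2 := hdet a (by omega) _ h2.symm
      rcases Nat.lt_or_ge (a + 1) t with h3 | h3
      · exact ⟨a + 1, h3, e1.symm, e2.symm⟩
      · have : a + 1 = t := by omega
        rw [this] at e1 e2
        exact ⟨s, hst, by rw [h]; exact e1.symm, by rw [h]; exact e2.symm⟩
  refine ⟨t - s, by omega, by omega, fun j hj => ?_⟩
  obtain ⟨a, -, h1, h2⟩ := key (j - s)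
  have e1 : s + (j - s) = j := by omega
  have e2 : t + (j - s) = j + (t - s) := by omega
  rw [e1] at h1
  rw [e2] at h2
  rw [h1, h2]

lemma abs2 {V : Type*} (W : ℕ → V) (Q H : ℕ)
    (hpig : ∀ o, ∃ s t, s < t ∧ t ≤ Q ∧ W (o + s) = W (o + t))
    (h1 : ∀ a ≤ H + Q, ∀ a' ≤ H + Q, ∀ b b', W a = W b → W (a + 1) ≠ W (b + 1) →
      W a' = W b' → W (a' + 1) ≠ W (b' + 1) → W a = W a')
    (h2 : ∀ a ≤ H + Q, ∀ b c, W a = W b → W a = W c →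
      W (a + 1) = W (b + 1) ∨ W (a + 1) = W (c + 1) ∨ W (b + 1) = W (c + 1)) :
    (∀ t, ∃ s ≤ H + Q, W t = W s) ∨
      ∃ p, 1 ≤ p ∧ p ≤ Q ∧ ∀ j, Q ≤ j → j + p ≤ H → W (j + p) = W j := by
  obtain ⟨s, N, hHs, hsN, hNH, hW⟩ : ∃ s N, H ≤ s ∧ s < N ∧ N ≤ H + Q ∧ W s = W N := by
    obtain ⟨s, t, h3, h4, h5⟩ := hpig H
    exact ⟨H + s, H + t, by omega, by omega, by omega, h5⟩
  have hle : ∀ c, c < N → ∃ d, d < N ∧ W (c + 1) = W d := by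
    intro c hc
    rcases Nat.lt_or_ge (c + 1) N with h | h
    · exact ⟨c + 1, h, rfl⟩
    · have : c + 1 = N := by omega
      exact ⟨s, hsN, by rw [this, hW]⟩
  by_cases hsp : ∃ a b, a < N ∧ b < N ∧ W a = W b ∧ W (a + 1) ≠ W (b + 1)
  · left
    obtain ⟨a, b, ha, hb, hab, hab'⟩ := hsp
    have : ∀ t, ∃ c, c < N ∧ W t = W c := by
      intro t
      induction t with
      | zero => exact ⟨0, by omega, rfl⟩
      | succ t ih =>
        obtain ⟨c, hc, htc⟩ := ih
        by_cases h : W (t + 1) = W (c + 1)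
        · rw [h]; exact hle c hc
        · have h3 := h1 c (by omega) a (by omega) t b htc.symm (fun h' => h h'.symm) hab hab'
          rcases h2 a (by omega) b t hab (by rw [← h3, htc]) with h4 | h4 | h4
          · exact absurd h4 hab'
          · rw [← h4]; exact hle a ha
          · rw [← h4]; exact hle b hb
    intro t
    obtain ⟨c, hc, h⟩ := this t
    exact ⟨c, by omega, h⟩
  · right
    push Not at hsp
    obtain ⟨s', t, hst, htQ, h⟩ := hpig 0
    simp only [zero_add] at h
    have key : ∀ j, t + j ≤ N → W (s' + j) = W (t + j) := by
      intro j
      induction j with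
      | zero => intro _; exact h
      | succ j ih => intro hj; exact hsp (s' + j) (t + j) (by omega) (by omega) (ih (by omega))
    refine ⟨t - s', by omega, by omega, fun j hj hj' => ?_⟩
    have := key (j - s') (by omega)
    have e1 : s' + (j - s') = j := by omega
    have e2 : t + (j - s') = j + (t - s') := by omega
    rw [e1, e2] at this
    exact this.symm

variable {A : Type*}

def word (x : ℤ → A) (n : ℕ) (a : ℤ) : Fin n → A := fun t => x (a + (t : ℕ))

lemma word_eq_iff {x y : ℤ → A} {n : ℕ} {a b : ℤ} :
    word x n a = word y n b ↔ ∀ t : ℕ, t < n → x (a + t) = y (b + t) := by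
  constructor
  · intro h t ht
    exact congrFun h ⟨t, ht⟩
  · intro h
    funext t
    exact h t t.2

lemma word_get {x y : ℤ → A} {n : ℕ} {a b : ℤ} (h : word x n a = word y n b) (i : ℤ)
    (h0 : 0 ≤ i) (h1 : i < n) : x (a + i) = y (b + i) := by
  have := word_eq_iff.1 h i.toNat (by omega)
  rwa [Int.toNat_of_nonneg h0] at this

lemma word_succ_right {x : ℤ → A} {n : ℕ} {a b : ℤ} (h : word x n a = word x n b) :
    word x n (a + 1) = word x n (b + 1) ↔ (n = 0 ∨ x (a + n) = x (b + n)) := by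
  constructor
  · intro h'
    rcases Nat.eq_zero_or_pos n with h0 | h0
    · exact Or.inl h0
    · right
      have := word_get h' (n - 1) (by omega) (by omega)
      convert this using 2 <;> ring
  · rintro (h' | h')
    · subst h'; funext t; exact t.elim0
    · rw [word_eq_iff]
      intro t ht
      rcases Nat.lt_or_ge (t + 1) n with h3 | h3
      · have := word_get h (t + 1) (by omega) (by omega)
        convert this using 2 <;> ring
      · have : (n : ℤ) = t + 1 := by omega
        rw [this] at h'
        convert h' using 2 <;> ring

lemma word_pred_left {x : ℤ → A} {n : ℕ} {a b : ℤ} (h : word x n a = word x n b)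
    (h' : x (a - 1) = x (b - 1)) :
    word x n (a - 1) = word x n (b - 1) := by
  rw [word_eq_iff]
  intro t ht
  rcases Nat.eq_zero_or_pos t with h0 | h0
  · subst h0; simpa using h'
  · have := word_get h (t - 1) (by omega) (by omega)
    convert this using 2 <;> ring

lemma word_first {x : ℤ → A} {n : ℕ} (hn : 0 < n) {a b : ℤ} (h : word x n a = word x n b) :
    x a = x b := by
  have := word_get h 0 le_rfl (by omega)
  simpa using this

def Lang (X : Set (ℤ → A)) (n : ℕ) : Type _ :=
  {w : Fin n → A // ∃ x ∈ X, ∃ m : ℤ, ∀ t : Fin n, x (m + (t : ℕ)) = w t}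

instance [Finite A] (X : Set (ℤ → A)) (n : ℕ) : Finite (Lang X n) := by
  unfold Lang; infer_instance

lemma card_Lang (X : Set (ℤ → A)) (n : ℕ) : Nat.card (Lang X n) = complexity X n := rfl

def toL {X : Set (ℤ → A)} {x : ℤ → A} (hx : x ∈ X) (n : ℕ) (a : ℤ) : Lang X n :=
  ⟨word x n a, x, hx, a, fun _ => rfl⟩

lemma toL_eq {X : Set (ℤ → A)} {x y : ℤ → A} (hx : x ∈ X) (hy : y ∈ X) (n : ℕ) (a b : ℤ) :
    toL hx n a = toL hy n b ↔ word x n a = word y n b := by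
  unfold toL; exact Subtype.mk_eq_mk

lemma Lang_ex {X : Set (ℤ → A)} {n : ℕ} (w : Lang X n) : ∃ x, ∃ hx : x ∈ X, ∃ a, toL hx n a = w := by
  obtain ⟨w, x, hx, a, h⟩ := w
  exact ⟨x, hx, a, Subtype.ext (funext h)⟩

def piR {X : Set (ℤ → A)} (n : ℕ) (w : Lang X (n + 1)) : Lang X n :=
  ⟨fun t => w.1 t.castSucc, by
    obtain ⟨w, x, hx, a, h⟩ := w
    exact ⟨x, hx, a, fun t => h t.castSucc⟩⟩

def piL {X : Set (ℤ → A)} (n : ℕ) (w : Lang X (n + 1)) : Lang X n :=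
  ⟨fun t => w.1 t.succ, by
    obtain ⟨w, x, hx, a, h⟩ := w
    refine ⟨x, hx, a + 1, fun t => ?_⟩
    refine Eq.trans ?_ (h t.succ)
    congr 1
    rw [Fin.val_succ]; push_cast; ring⟩

lemma piR_toL {X : Set (ℤ → A)} {x : ℤ → A} (hx : x ∈ X) (n : ℕ) (a : ℤ) :
    piR n (toL hx (n + 1) a) = toL hx n a := rfl

lemma piL_toL {X : Set (ℤ → A)} {x : ℤ → A} (hx : x ∈ X) (n : ℕ) (a : ℤ) :
    piL n (toL hx (n + 1) (a - 1)) = toL hx n a := by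
  apply Subtype.ext
  funext t
  change x (a - 1 + (t.succ : ℕ)) = x (a + (t : ℕ))
  congr 1
  rw [Fin.val_succ]; push_cast; ring

lemma count_right [Finite A] (X : Set (ℤ → A)) (n m : ℕ)
    (hD : complexity X (n + 1) ≤ complexity X n + m)
    (y : Fin m → ℤ → A) (hy : ∀ i, y i ∈ X) (a b : Fin m → ℤ)
    (hs : ∀ i, word (y i) n (a i) = word (y i) n (b i) ∧ y i (a i + n) ≠ y i (b i + n))
    (hinj : Function.Injective fun i => word (y i) n (a i)) (x : ℤ → A) (hx : x ∈ X) :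
    (∀ a' b', word x n a' = word x n b' → x (a' + n) ≠ x (b' + n) →
      ∃ i, word (y i) n (a i) = word x n a') ∧
    (∀ a' b' c', word x n a' = word x n b' → word x n a' = word x n c' →
      x (a' + n) = x (b' + n) ∨ x (a' + n) = x (c' + n) ∨ x (b' + n) = x (c' + n)) := by
  have hl : ∀ {z : ℤ → A} {a b : ℤ}, word z (n + 1) a = word z (n + 1) b → z (a + n) = z (b + n) := by
    intro z a b h
    exact word_get h n (by omega) (by omega)
  obtain ⟨f1, f2⟩ := fib (piR (X := X) n)
    (by
      intro w
      obtain ⟨z, hz, c, rfl⟩ := Lang_ex w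
      exact ⟨toL hz (n + 1) c, piR_toL hz n c⟩) m hD
    (fun i => toL (hy i) n (a i))
    (fun i j h => hinj ((toL_eq _ _ _ _ _).1 h))
    (fun i => toL (hy i) (n + 1) (a i)) (fun i => toL (hy i) (n + 1) (b i))
    (fun i => piR_toL _ _ _)
    (fun i => by rw [piR_toL, toL_eq]; exact (hs i).1.symm)
    (fun i h => by rw [toL_eq] at h; exact (hs i).2 (hl h))
  constructor
  · intro a' b' h h'
    obtain ⟨i, hi⟩ := f1 (toL hx (n + 1) a') (toL hx (n + 1) b')
      (by rw [piR_toL, piR_toL, toL_eq]; exact h)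
      (fun h => by rw [toL_eq] at h; exact h' (hl h))
    rw [piR_toL, toL_eq] at hi
    exact ⟨i, hi⟩
  · intro a' b' c' h h'
    have := f2 (toL hx (n + 1) a') (toL hx (n + 1) b') (toL hx (n + 1) c')
      (by rw [piR_toL, piR_toL, toL_eq]; exact h) (by rw [piR_toL, piR_toL, toL_eq]; exact h')
    rw [toL_eq, toL_eq, toL_eq] at this
    exact this.imp hl (Or.imp hl hl)

lemma count_left [Finite A] (X : Set (ℤ → A)) (n m : ℕ)
    (hD : complexity X (n + 1) ≤ complexity X n + m)
    (y : Fin m → ℤ → A) (hy : ∀ i, y i ∈ X) (a b : Fin m → ℤ)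
    (hs : ∀ i, word (y i) n (a i) = word (y i) n (b i) ∧ y i (a i - 1) ≠ y i (b i - 1))
    (hinj : Function.Injective fun i => word (y i) n (a i)) (x : ℤ → A) (hx : x ∈ X) :
    (∀ a' b', word x n a' = word x n b' → x (a' - 1) ≠ x (b' - 1) →
      ∃ i, word (y i) n (a i) = word x n a') ∧
    (∀ a' b' c', word x n a' = word x n b' → word x n a' = word x n c' →
      x (a' - 1) = x (b' - 1) ∨ x (a' - 1) = x (c' - 1) ∨ x (b' - 1) = x (c' - 1)) := by
  have hl : ∀ {z : ℤ → A} {a b : ℤ}, word z (n + 1) (a - 1) = word z (n + 1) (b - 1) →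
      z (a - 1) = z (b - 1) := by
    intro z a b h
    exact word_first (by omega) h
  obtain ⟨f1, f2⟩ := fib (piL (X := X) n)
    (by
      intro w
      obtain ⟨z, hz, c, rfl⟩ := Lang_ex w
      exact ⟨toL hz (n + 1) (c - 1), piL_toL hz n c⟩) m hD
    (fun i => toL (hy i) n (a i))
    (fun i j h => hinj ((toL_eq _ _ _ _ _).1 h))
    (fun i => toL (hy i) (n + 1) (a i - 1)) (fun i => toL (hy i) (n + 1) (b i - 1))
    (fun i => piL_toL _ _ _)
    (fun i => by rw [piL_toL, toL_eq]; exact (hs i).1.symm)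
    (fun i h => by rw [toL_eq] at h; exact (hs i).2 (hl h))
  constructor
  · intro a' b' h h'
    obtain ⟨i, hi⟩ := f1 (toL hx (n + 1) (a' - 1)) (toL hx (n + 1) (b' - 1))
      (by rw [piL_toL, piL_toL, toL_eq]; exact h)
      (fun h => by rw [toL_eq] at h; exact h' (hl h))
    rw [piL_toL, toL_eq] at hi
    exact ⟨i, hi⟩
  · intro a' b' c' h h'
    have := f2 (toL hx (n + 1) (a' - 1)) (toL hx (n + 1) (b' - 1)) (toL hx (n + 1) (c' - 1))
      (by rw [piL_toL, piL_toL, toL_eq]; exact h) (by rw [piL_toL, piL_toL, toL_eq]; exact h')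
    rw [toL_eq, toL_eq, toL_eq] at this
    exact this.imp hl (Or.imp hl hl)

/-- pigeonhole for words -/
lemma pig [Finite A] {X : Set (ℤ → A)} {x : ℤ → A} (hx : x ∈ X) (n Q : ℕ)
    (hQ : complexity X n ≤ Q) (g : ℕ → ℤ) :
    ∃ s t, s < t ∧ t ≤ Q ∧ word x n (g s) = word x n (g t) := by
  by_contra hcon
  push Not at hcon
  have hinj : Function.Injective (fun s : Fin (Q + 1) => toL hx n (g s)) := by
    intro s t h
    simp only [toL_eq] at h
    by_contra hne
    rcases lt_or_gt_of_ne (fun h' => hne (Fin.ext h') : (s : ℕ) ≠ t) with h1 | h1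
    · exact hcon _ _ h1 (by omega) h
    · exact hcon _ _ h1 (by omega) h.symm
  have := Nat.card_le_card_of_injective _ hinj
  rw [card_Lang] at this
  simp at this
  omega

def EvPer (x : ℤ → A) : Prop := ∃ p : ℕ, 1 ≤ p ∧ ∃ T : ℤ, ∀ j, T ≤ j → x (j + p) = x j

lemma per_mul {x : ℤ → A} {p : ℤ} (M : ℤ) (h : ∀ j, j < M → x (j - p) = x j) (hp : 0 ≤ p) (q : ℕ) :
    ∀ j, j < M → x (j - q * p) = x j := by
  induction q with
  | zero => simp
  | succ q ih =>
    intro j hj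
    rw [← ih j hj, ← h (j - q * p) (by nlinarith [mul_nonneg (Int.natCast_nonneg q) hp])]
    congr 1; push_cast; ring

lemma right_special [Finite A] {X : Set (ℤ → A)} {x : ℤ → A} (hx : x ∈ X) (hne : ¬ EvPer x)
    (n Q : ℕ) (hn : 0 < n) (hQ : complexity X n ≤ Q) :
    ∃ a : ℕ, a ≤ Q ∧ ∃ b : ℤ, word x n a = word x n b ∧ x (a + n) ≠ x (b + n) := by
  by_contra hcon
  push Not at hcon
  obtain ⟨p, hp1, hp2, hp⟩ := abs1 (fun t : ℕ => word x n t) Q (pig hx n Q hQ (fun t => t))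
    (by
      intro a ha b h
      have := (word_succ_right h).2 (Or.inr (hcon a ha b h))
      push_cast; exact this)
  apply hne
  refine ⟨p, hp1, Q, fun j hj => ?_⟩
  have := word_first hn (hp j.toNat (by omega))
  push_cast at this
  rwa [Int.toNat_of_nonneg (by omega)] at this

lemma left_special [Finite A] {X : Set (ℤ → A)} {x : ℤ → A} (hx : x ∈ X) (hne : ¬ EvPer x) (C : ℕ)
    (hC : ∀ᶠ n : ℕ in atTop, complexity X n ≤ C * n) :
    ∀ᶠ n : ℕ in atTop, ∃ a : ℕ, a ≤ C * n ∧ ∃ b : ℤ, word x n a = word x n b ∧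
      x (a - 1) ≠ x (b - 1) := by
  by_contra hcon
  rw [not_eventually] at hcon
  have hper : ∃ᶠ n : ℕ in atTop, ∃ p : ℕ, 1 ≤ p ∧ ∀ j : ℤ, j < n → x (j - p) = x j := by
    refine (hcon.and_eventually (hC.and (eventually_gt_atTop 0))).mono ?_
    rintro n ⟨h, hQ, hn⟩
    push Not at h
    obtain ⟨p, hp1, hp2, hp⟩ := abs1 (fun t : ℕ => word x n (((C * n : ℕ) : ℤ) - t)) (C * n)
      (pig hx n _ hQ (fun t => ((C * n : ℕ) : ℤ) - t))
      (by
        intro a ha b hab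
        have e : (((C * n : ℕ) : ℤ) - a) = ((C * n - a : ℕ) : ℤ) := by omega
        have h3 := h (C * n - a) (by omega) (((C * n : ℕ) : ℤ) - b) (by rw [← e]; exact hab)
        rw [← e] at h3
        have := word_pred_left hab h3
        push_cast at this ⊢
        simp only [sub_sub] at this
        exact this)
    refine ⟨p, hp1, fun j hj => ?_⟩
    by_cases hj0 : 0 ≤ j
    · have := word_get (hp (C * n) le_rfl) j hj0 (by omega)
      push_cast at this
      convert this using 2 <;> ring
    · have := word_get (hp (C * n + (-j).toNat) (by omega)) 0 (by omega) (by omega)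
      push_cast at this
      have e : ((-j).toNat : ℤ) = -j := by omega
      rw [e] at this
      convert this using 2 <;> ring
  obtain ⟨n0, ⟨p, hp1, hp⟩, hn0⟩ := (hper.and_eventually (eventually_gt_atTop 0)).exists
  apply hne
  refine ⟨p, hp1, 0, fun j hj => ?_⟩
  obtain ⟨n, ⟨p', hp'1, hp'⟩, hnj⟩ := (hper.and_eventually (eventually_gt_atTop (j + p).toNat)).exists
  have h1 := per_mul n hp' (by omega) (j + p).toNat j (by omega)
  have h2 := per_mul n hp' (by omega) (j + p).toNat (j + p) (by omega)
  rw [← h1, ← h2]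
  have h3 : ((j + p).toNat : ℤ) = j + p := by omega
  rw [h3]
  have h4 := hp (j + p - (j + p) * p') (by
    have h5 : (1 : ℤ) ≤ p' := by omega
    have h6 : (0 : ℤ) < n0 := by omega
    nlinarith [mul_le_mul_of_nonneg_left h5 (by omega : (0 : ℤ) ≤ j + p)])
  rw [← h4]
  congr 1; ring

lemma chain {x : ℤ → A} (C R n1 : ℕ) (hR : 1 ≤ R) (D : ℕ → Prop)
    (hD : ∀ N, n1 ≤ N → ∃ n, D n ∧ N ≤ n ∧ n ≤ R * N)
    (hper : ∀ n, n1 ≤ n → D n → ∃ p : ℕ, 1 ≤ p ∧ p ≤ C * n ∧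
      ∀ i : ℕ, C * n ≤ i → i ≤ (C + 4 * C * R) * n → x (i + p) = x i) : EvPer x := by
  obtain ⟨n0, hD0, hn0, -⟩ := hD (n1 + 1) (by omega)
  obtain ⟨p, hp1, hp2, hp⟩ := hper n0 (by omega) hD0
  have key : ∀ N, ∃ n, N ≤ n ∧ n0 ≤ n ∧
      ∀ i : ℕ, C * n0 ≤ i → i ≤ 4 * C * R * n → x (i + p) = x i := by
    intro N
    induction N with
    | zero =>
      refine ⟨n0, by omega, le_rfl, fun i h1 h2 => hp i h1 (by nlinarith)⟩
    | succ N ih =>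
      obtain ⟨n, hN, hn, h⟩ := ih
      obtain ⟨n', hDn', hn', hn'R⟩ := hD (n + 1) (by omega)
      obtain ⟨p', hp'1, hp'2, hp'⟩ := hper n' (by omega) hDn'
      refine ⟨n', by omega, by omega, ?_⟩
      have hb : n' ≤ 2 * R * n := by nlinarith
      have hb2 : 2 * (C * n') ≤ 4 * C * R * n := by nlinarith [Nat.mul_le_mul_left (2 * C) hb]
      have hpn : p ≤ C * n' := hp2.trans (Nat.mul_le_mul_left C (by omega))
      intro i
      induction i using Nat.strong_induction_on with
      | _ i ihi =>
        intro h1 h2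
        by_cases h3 : i ≤ 4 * C * R * n
        · exact h i h1 h3
        · have hz : C * n0 ≤ C * n' := Nat.mul_le_mul_left C (by omega)
          have hdist : (C + 4 * C * R) * n' = C * n' + 4 * C * R * n' := by ring
          have e1 := ihi (i - p') (by omega) (by omega) (by omega)
          have e2 := hp' (i - p') (by omega) (by omega)
          have e3 := hp' (i - p' + p) (by omega) (by omega)
          have c1 : ((i - p' : ℕ) : ℤ) = i - p' := by omega
          have c2 : ((i - p' + p : ℕ) : ℤ) = i - p' + p := by omega
          rw [c1] at e1 e2
          rw [c2] at e3
          have d1 : (i : ℤ) - p' + p' = i := by ring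
          have d2 : (i : ℤ) - p' + p + p' = i + p := by ring
          rw [d1] at e2
          rw [d2] at e3
          rw [e3, e1, e2]
  refine ⟨p, hp1, (C * n0 : ℕ), fun j hj => ?_⟩
  have hCR : 1 ≤ 4 * C * R := by
    have : 1 ≤ C := by
      rcases Nat.eq_zero_or_pos C with h | h
      · subst h; omega
      · exact h
    nlinarith
  obtain ⟨n, hn, -, h⟩ := key j.toNat
  have := h j.toNat (by omega) (by nlinarith)
  rwa [Int.toNat_of_nonneg (by omega)] at this

end Combinatorics

section MeasurePart

variable {A : Type*}

def cyl (I : Finset ℤ) (u : ℤ → A) : Set (ℤ → A) := {y | ∀ i ∈ I, y i = u i}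

open Classical in
noncomputable def cc (I : Finset ℤ) (u : ℤ → A) (x : ℤ → A) (t : ℤ) : ℝ :=
  if ∀ i ∈ I, x (i + t) = u i then 1 else 0

lemma shift_iter (x : ℤ → A) (n : ℕ) (i : ℤ) : shift^[n] x i = x (i + n) := by
  induction n generalizing i with
  | zero => simp
  | succ n ih =>
    rw [Function.iterate_succ_apply']
    change shift^[n] x (i + 1) = _
    rw [ih]; congr 1; push_cast; ring

open Classical in
lemma cc_eq (I : Finset ℤ) (u x : ℤ → A) (n : ℕ) :
    cc I u x n = (cyl I u).indicator 1 (shift^[n] x) := by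
  simp only [cc, Set.indicator, cyl, Set.mem_ofPred_eq, shift_iter]
  rfl

lemma cc_bdd (I : Finset ℤ) (u x y : ℤ → A) (t s : ℤ) : |cc I u x t - cc I u y s| ≤ 1 := by
  unfold cc
  split_ifs <;> norm_num

lemma cc_congr {I : Finset ℤ} {u x y : ℤ → A} {t s : ℤ} (h : ∀ i ∈ I, x (i + t) = y (i + s)) :
    cc I u x t = cc I u y s := by
  unfold cc
  congr 1
  apply propext
  refine forall₂_congr fun i hi => ?_
  rw [h i hi]

lemma cc_compare (I : Finset ℤ) (u : ℤ → A) (M : ℕ) (hM : ∀ i ∈ I, |i| ≤ M) (x y : ℤ → A) (n : ℕ)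
    (t s : ℤ) (h : word x n t = word y n s) :
    |∑ j ∈ Finset.range n, cc I u x (t + j) - ∑ j ∈ Finset.range n, cc I u y (s + j)| ≤ 2 * M := by
  rw [← Finset.sum_sub_distrib]
  refine (Finset.abs_sum_le_sum_abs _ _).trans ?_
  have h1 : ∀ j ∈ Finset.range n, |cc I u x (t + j) - cc I u y (s + j)| ≤
      if j < M ∨ n ≤ j + M then (1 : ℝ) else 0 := by
    intro j hj
    split_ifs with hc
    · exact cc_bdd _ _ _ _ _ _
    · push Not at hc
      rw [cc_congr (y := y) (s := s + j), sub_self, abs_zero]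
      intro i hi
      have := abs_le.1 (hM i hi)
      have := word_get h (i + j) (by omega) (by omega)
      convert this using 2 <;> ring
  refine (Finset.sum_le_sum h1).trans ?_
  rw [Finset.sum_ite, Finset.sum_const_zero, add_zero, Finset.sum_const, nsmul_eq_mul, mul_one]
  have h2 : (Finset.range n).filter (fun j => j < M ∨ n ≤ j + M) ⊆
      Finset.range M ∪ Finset.Ico (n - M) n := by
    intro j hj
    simp only [Finset.mem_filter, Finset.mem_range, Finset.mem_union, Finset.mem_Ico] at hj ⊢
    omega
  have h3 := (Finset.card_le_card h2).trans (Finset.card_union_le _ _)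
  simp only [Finset.card_range, Nat.card_Ico] at h3
  have h4 : ((Finset.range n).filter (fun j => j < M ∨ n ≤ j + M)).card ≤ 2 * M := by omega
  exact_mod_cast h4

lemma good_unif (g : ℕ → ℝ) (a : ℝ)
    (h : Tendsto (fun N : ℕ => (∑ n ∈ Finset.range N, g n) / (N : ℝ)) atTop (nhds a))
    (ε : ℝ) (hε : 0 < ε) (K : ℕ) :
    ∀ᶠ n : ℕ in atTop, ∀ t ≤ K * n, |∑ j ∈ Finset.range n, g (t + j) - a * n| ≤ ε * n := by
  set S : ℕ → ℝ := fun N => ∑ n ∈ Finset.range N, g n with hS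
  set e : ℝ := ε / (2 * (2 * K + 1)) with he
  have hepos : 0 < e := by positivity
  obtain ⟨N1, hN1⟩ := (Metric.tendsto_atTop.1 h) e hepos
  set C0 : ℝ := ∑ N ∈ Finset.range N1, |S N - a * N| with hC0
  have hC0n : 0 ≤ C0 := Finset.sum_nonneg fun _ _ => abs_nonneg _
  have hb : ∀ N : ℕ, |S N - a * N| ≤ e * N + C0 := by
    intro N
    rcases Nat.lt_or_ge N N1 with h1 | h1
    · have : |S N - a * N| ≤ C0 :=
        Finset.single_le_sum (f := fun N : ℕ => |S N - a * N|) (fun _ _ => abs_nonneg _)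
          (Finset.mem_range.2 h1)
      have : 0 ≤ e * N := by positivity
      linarith
    · rcases Nat.eq_zero_or_pos N with h0 | h0
      · subst h0; simp [hS]; exact hC0n
      · have h2 := hN1 N h1
        rw [Real.dist_eq] at h2
        have hNp : (0 : ℝ) < N := by exact_mod_cast h0
        have h3 : S N - a * N = (S N / N - a) * N := by field_simp
        rw [h3, abs_mul, abs_of_pos hNp]
        have := mul_le_mul_of_nonneg_right h2.le hNp.le
        linarith
  filter_upwards [eventually_ge_atTop (Nat.ceil (4 * C0 / ε))] with n hn t ht
  have hn' : 4 * C0 / ε ≤ n := (Nat.le_ceil _).trans (by exact_mod_cast hn)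
  rw [div_le_iff₀ hε] at hn'
  have e1 : ∑ j ∈ Finset.range n, g (t + j) = S (t + n) - S t := by
    simp only [hS]; rw [Finset.sum_range_add]; ring
  have b1 := abs_le.1 (hb (t + n))
  have b2 := abs_le.1 (hb t)
  have ht' : (t : ℝ) ≤ K * n := by exact_mod_cast ht
  have e2 : e * (2 * (2 * K + 1)) = ε := by rw [he]; field_simp
  have e3 : e * (2 * t + n) ≤ ε / 2 * n := by
    have : e * (2 * t + n) ≤ e * ((2 * K + 1) * n) := by
      apply mul_le_mul_of_nonneg_left _ hepos.le; linarith
    refine this.trans (le_of_eq ?_)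
    rw [← e2]; ring
  rw [e1, abs_le]
  push_cast at b1
  constructor <;> nlinarith

variable [TopologicalSpace A] [DiscreteTopology A]

lemma isClopen_cyl (I : Finset ℤ) (u : ℤ → A) : IsClopen (cyl I u) := by
  have : cyl I u = ⋂ i ∈ I, (fun y : ℤ → A => y i) ⁻¹' {u i} := by
    ext y; simp [cyl]
  rw [this]
  exact isClopen_biInter_finset fun i _ => (isClopen_discrete _).preimage (continuous_apply i)

lemma continuous_shift : Continuous (shift : (ℤ → A) → ℤ → A) :=
  continuous_pi fun n => continuous_apply (n + 1)

lemma continuous_ind (I : Finset ℤ) (u : ℤ → A) :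
    Continuous ((cyl I u).indicator (1 : (ℤ → A) → ℝ)) :=
  (isClopen_cyl I u).continuous_indicator continuous_one

lemma continuous_cc (I : Finset ℤ) (u : ℤ → A) (n : ℕ) : Continuous (fun y => cc I u y n) := by
  simp only [cc_eq]
  exact (continuous_ind I u).comp (continuous_shift.iterate n)

variable [Fintype A] [MeasurableSpace A] [BorelSpace A]

lemma meas_cyl (I : Finset ℤ) (u : ℤ → A) : MeasurableSet (cyl I u) :=
  (isClopen_cyl I u).2.measurableSet

lemma freq {ν : Measure (ℤ → A)} {x : ℤ → A} (h : IsGenericPt ν x) (I : Finset ℤ) (u : ℤ → A) :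
    Tendsto (fun N : ℕ => (∑ n ∈ Finset.range N, cc I u x n) / (N : ℝ)) atTop
      (nhds (ν.real (cyl I u))) := by
  have := h _ (continuous_ind I u)
  rw [integral_indicator_one (meas_cyl I u)] at this
  simpa only [cc_eq] using this

lemma ext_cyl {μ ν : Measure (ℤ → A)} [IsFiniteMeasure μ] [IsFiniteMeasure ν] (x : ℤ → A)
    (h : ∀ I u, μ.real (cyl I u) = ν.real (cyl I u)) : μ = ν := by
  refine IsProjectiveLimit.unique (P := fun I : Finset ℤ => ν.map I.restrict) (fun I => ?_)
    (fun I => rfl)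
  apply Measure.ext_of_singleton
  intro w
  rw [Measure.map_apply (Finset.measurable_restrict I) (measurableSet_singleton w),
    Measure.map_apply (Finset.measurable_restrict I) (measurableSet_singleton w)]
  classical
  have e : (I.restrict : (ℤ → A) → (I → A)) ⁻¹' {w} = cyl I (fun i => if hi : i ∈ I then w ⟨i, hi⟩ else x i) := by
    ext y
    simp only [Set.mem_preimage, Set.mem_singleton_iff, cyl, Set.mem_ofPred_eq]
    constructor
    · rintro rfl i hi
      simp [hi]
    · intro h
      funext i
      have := h i i.2
      simpa using this
  rw [e]
  have := h I (fun i => if hi : i ∈ I then w ⟨i, hi⟩ else x i)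
  rwa [measureReal_eq_measureReal_iff] at this

lemma exists_bd (I : Finset ℤ) : ∃ M : ℕ, ∀ i ∈ I, |i| ≤ M := by
  refine ⟨∑ i ∈ I, i.natAbs, fun i hi => ?_⟩
  have h : i.natAbs ≤ ∑ i ∈ I, i.natAbs := Finset.single_le_sum (f := fun i : ℤ => i.natAbs) (fun _ _ => Nat.zero_le _) hi
  rw [Int.abs_eq_natAbs]
  exact Int.ofNat_le.2 h

lemma sep {μ ν : Measure (ℤ → A)} [IsProbabilityMeasure μ] [IsProbabilityMeasure ν] {x y : ℤ → A}
    (hx : IsGenericPt μ x) (hy : IsGenericPt ν y) (hne : μ ≠ ν) (K : ℕ) :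
    ∀ᶠ n : ℕ in atTop, ∀ s t : ℕ, s ≤ K * n → t ≤ K * n → word x n s ≠ word y n t := by
  have : ∃ I u, μ.real (cyl I u) ≠ ν.real (cyl I u) := by
    by_contra hcon
    push Not at hcon
    exact hne (ext_cyl x hcon)
  obtain ⟨I, u, hIu⟩ := this
  obtain ⟨M, hM⟩ := exists_bd I
  set η := |μ.real (cyl I u) - ν.real (cyl I u)| with hη
  have hηp : 0 < η := abs_pos.2 (sub_ne_zero.2 hIu)
  filter_upwards [good_unif _ _ (freq hx I u) (η / 4) (by positivity) K,
    good_unif _ _ (freq hy I u) (η / 4) (by positivity) K,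
    eventually_gt_atTop (Nat.ceil (4 * M / η))] with n h1 h2 h3 s t hs ht hw
  have h3' : 4 * M / η < n := (Nat.le_ceil _).trans_lt (by exact_mod_cast h3)
  rw [div_lt_iff₀ hηp] at h3'
  have c := cc_compare I u M hM x y n s t hw
  have h1 := h1 s hs
  have h2 := h2 t ht
  push_cast at h1 h2
  have hn0 : (0 : ℝ) ≤ n := Nat.cast_nonneg n
  have : η * n = |μ.real (cyl I u) * n - ν.real (cyl I u) * n| := by
    rw [← sub_mul, abs_mul, abs_of_nonneg hn0]
  have h4 : |μ.real (cyl I u) * n - ν.real (cyl I u) * n| ≤ η / 4 * n + 2 * M + η / 4 * n := by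
    rw [abs_le] at *
    constructor <;> linarith
  nlinarith

lemma generic_inv {μ : Measure (ℤ → A)} [IsProbabilityMeasure μ] {x : ℤ → A}
    (hx : IsGenericPt μ x) : μ.map shift = μ := by
  have hm : Measurable (shift : (ℤ → A) → ℤ → A) := continuous_shift.measurable
  have : IsProbabilityMeasure (μ.map shift) := Measure.isProbabilityMeasure_map hm.aemeasurable
  apply ext_cyl x
  intro I u
  rw [map_measureReal_apply hm (meas_cyl I u)]
  have h1 := hx _ ((continuous_ind I u).comp continuous_shift)
  have h2 := hx _ (continuous_ind I u)
  have e : ((cyl I u).indicator (1 : (ℤ → A) → ℝ)) ∘ shift =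
      (shift ⁻¹' cyl I u).indicator (1 : (ℤ → A) → ℝ) := by
    ext y; rfl
  have e1 : ∫ y, ((cyl I u).indicator (1 : (ℤ → A) → ℝ) ∘ shift) y ∂μ
      = μ.real (shift ⁻¹' cyl I u) := by
    rw [e, integral_indicator_one (hm (meas_cyl I u))]
  rw [e1] at h1
  rw [integral_indicator_one (meas_cyl I u)] at h2
  have h3 := h1.sub h2
  have h4 : Tendsto (fun N : ℕ => (1 : ℝ) / N) atTop (nhds 0) := tendsto_one_div_atTop_nhds_zero_nat
  have h5 := tendsto_nhds_unique h3 (squeeze_zero_norm (fun N => ?_) h4)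
  · linarith
  · rw [← sub_div, ← Finset.sum_sub_distrib, norm_div, Real.norm_natCast]
    refine div_le_div_of_nonneg_right ?_ (Nat.cast_nonneg _)
    have e2 : ∀ n ∈ Finset.range N, ((cyl I u).indicator (1 : (ℤ → A) → ℝ) ∘ shift) (shift^[n] x)
      - (cyl I u).indicator (1 : (ℤ → A) → ℝ) (shift^[n] x) =
        cc I u x ((n + 1 : ℕ) : ℤ) - cc I u x (n : ℤ) := by
      intro n _
      rw [cc_eq, cc_eq, Function.iterate_succ_apply']; rfl
    rw [Finset.sum_congr rfl e2, Finset.sum_range_sub (fun n : ℕ => cc I u x n)]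
    exact cc_bdd _ _ _ _ _ _

lemma generic_orbit {μ : Measure (ℤ → A)} [IsProbabilityMeasure μ] {x : ℤ → A}
    (hx : IsGenericPt μ x) : μ (orbitClosure x) = 1 := by
  have hcl : IsClosed (orbitClosure x) := isClosed_closure
  rw [← prob_compl_eq_zero_iff hcl.measurableSet]
  classical
  let ι := {q : Σ I : Finset ℤ, (I → A) //
    cyl q.1 (fun i => if hi : i ∈ q.1 then q.2 ⟨i, hi⟩ else x i) ∩ orbitClosure x = ∅}
  have hsub : (orbitClosure x)ᶜ ⊆
      ⋃ q : ι, cyl q.1.1 (fun i => if hi : i ∈ q.1.1 then q.1.2 ⟨i, hi⟩ else x i) := by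
    intro y hy
    have hn : (orbitClosure x)ᶜ ∈ nhds y := hcl.isOpen_compl.mem_nhds hy
    rw [nhds_pi, Filter.mem_pi'] at hn
    obtain ⟨I, t, ht, hsub⟩ := hn
    have hsub2 : cyl I y ⊆ (orbitClosure x)ᶜ := by
      intro z hz
      apply hsub
      intro i hi
      rw [hz i hi]
      exact mem_of_mem_nhds (ht i)
    have hc : cyl I (fun i => if hi : i ∈ I then (fun j : I => y j) ⟨i, hi⟩ else x i) = cyl I y := by
      ext z
      refine forall₂_congr fun i hi => ?_
      simp [hi]
    refine Set.mem_iUnion.2 ⟨⟨⟨I, fun j => y j⟩, ?_⟩, ?_⟩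
    · rw [hc]
      exact Set.disjoint_iff_inter_eq_empty.1 (Set.disjoint_left.2 hsub2)
    · change y ∈ cyl I _
      rw [hc]
      intro i _; rfl
  refine measure_mono_null hsub ((measure_iUnion_null_iff).2 ?_)
  rintro ⟨⟨I, w⟩, hq⟩
  set u : ℤ → A := fun i => if hi : i ∈ I then w ⟨i, hi⟩ else x i with hu
  change μ (cyl I u) = 0
  have hf := freq hx I u
  have hz : ∀ n : ℕ, cc I u x n = 0 := by
    intro n
    rw [cc_eq]
    apply Set.indicator_of_notMem
    intro hmem
    have : shift^[n] x ∈ cyl I u ∩ orbitClosure x :=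
      ⟨hmem, subset_closure ⟨n, funext fun i => shift_iter x n i⟩⟩
    rw [hq] at this
    exact this
  simp only [hz, Finset.sum_const_zero, zero_div] at hf
  have := tendsto_nhds_unique hf tendsto_const_nhds
  rwa [measureReal_eq_zero_iff] at this

lemma bad {μ : Measure (ℤ → A)} [IsProbabilityMeasure μ] {x : ℤ → A}
    (hx : IsGenericPt μ x) (hnue : ¬ UniquelyErgodicOn (orbitClosure x)) (K : ℕ) :
    ∀ᶠ n : ℕ in atTop, ∃ t : ℤ, ∀ s : ℕ, s ≤ K * n → word x n t ≠ word x n s := by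
  obtain ⟨l, ⟨hl1, hl2, hl3⟩, hlne⟩ : ∃ l : Measure (ℤ → A),
      (IsProbabilityMeasure l ∧ l.map shift = l ∧ l (orbitClosure x) = 1) ∧ l ≠ μ := by
    by_contra hcon
    push Not at hcon
    exact hnue ⟨μ, ⟨inferInstance, generic_inv hx, generic_orbit hx⟩, fun l hl => hcon l hl⟩
  have : ∃ I u, l.real (cyl I u) ≠ μ.real (cyl I u) := by
    by_contra hcon
    push Not at hcon
    exact hlne (ext_cyl x hcon)
  obtain ⟨I, u, hIu⟩ := this
  obtain ⟨M, hM⟩ := exists_bd I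
  set η := |l.real (cyl I u) - μ.real (cyl I u)| with hη
  have hηp : 0 < η := abs_pos.2 (sub_ne_zero.2 hIu)
  filter_upwards [good_unif _ _ (freq hx I u) (η / 4) (by positivity) K,
    eventually_gt_atTop (Nat.ceil (8 * M / η))] with n h1 h3
  have h3' : 8 * M / η < n := (Nat.le_ceil _).trans_lt (by exact_mod_cast h3)
  rw [div_lt_iff₀ hηp] at h3'
  have hnp : (0 : ℝ) < n := by exact_mod_cast (Nat.zero_le _).trans_lt h3
  by_contra hcon
  push Not at hcon
  have horb : ∀ t : ℤ, |∑ j ∈ Finset.range n, cc I u x (t + j) - μ.real (cyl I u) * n| ≤ η / 2 * n := by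
    intro t
    obtain ⟨s, hs, hw⟩ := hcon t
    have c := cc_compare I u M hM x x n t s hw
    have h1 := h1 s hs
    push_cast at h1
    rw [abs_le] at *
    constructor <;> linarith
  set F : (ℤ → A) → ℝ := fun y => ∑ j ∈ Finset.range n, cc I u y (j : ℕ) - μ.real (cyl I u) * n
    with hF
  have hFc : Continuous F :=
    (continuous_finsetSum _ fun j _ => continuous_cc I u j).sub continuous_const
  have hY : ∀ y ∈ orbitClosure x, ‖F y‖ ≤ η / 2 * n := by
    have hcl : IsClosed {y | ‖F y‖ ≤ η / 2 * n} := isClosed_le hFc.norm continuous_const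
    apply closure_minimal _ hcl
    rintro _ ⟨t, rfl⟩
    have := horb t
    simp only [Set.mem_ofPred_eq, hF, Real.norm_eq_abs]
    have e : ∀ j : ℕ, cc I u (fun n => x (n + t)) (j : ℤ) = cc I u x (t + j) := by
      intro j
      apply cc_congr
      intro i _
      congr 1; ring
    simp only [e]
    exact this
  have hmeas : MeasurableSet (orbitClosure x) := isClosed_closure.measurableSet
  have hae : ∀ᵐ y ∂l, y ∈ orbitClosure x := by
    rw [← prob_compl_eq_zero_iff hmeas] at hl3
    exact hl3
  have hint := norm_integral_le_of_norm_le_const (hae.mono hY)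
  have hmp : MeasurePreserving (shift : (ℤ → A) → ℤ → A) l l := ⟨continuous_shift.measurable, hl2⟩
  have hcy : MeasurableSet (cyl I u) := (meas_cyl I u)
  have hj : ∀ j : ℕ, ∫ y, cc I u y (j : ℕ) ∂l = l.real (cyl I u) := by
    intro j
    have hmpj := hmp.iterate j
    have e : (fun y : ℤ → A => cc I u y (j : ℕ)) =
        (shift^[j] ⁻¹' cyl I u).indicator 1 := by
      funext y; rw [cc_eq]; rfl
    rw [e, integral_indicator_one (hmpj.measurable hcy)]
    exact hmpj.measureReal_preimage hcy.nullMeasurableSet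
  have hin : ∀ j : ℕ, Integrable (fun y : ℤ → A => cc I u y (j : ℕ)) l := by
    intro j
    refine Integrable.of_bound (continuous_cc I u j).measurable.aestronglyMeasurable 1 ?_
    refine Eventually.of_forall fun y => ?_
    unfold cc
    split_ifs <;> simp
  have hFi : ∫ y, F y ∂l = (l.real (cyl I u) - μ.real (cyl I u)) * n := by
    rw [hF, integral_sub (integrable_finsetSum _ fun j _ => hin j) (integrable_const _),
      integral_finsetSum _ fun j _ => hin j]
    simp only [hj]
    simp
    ring
  rw [hFi, norm_mul, Real.norm_eq_abs, Real.norm_natCast, ← hη] at hint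
  simp at hint
  nlinarith

lemma atomic {ν : Measure (ℤ → A)} [IsProbabilityMeasure ν] {x : ℤ → A}
    (hx : IsGenericPt ν x) (hper : EvPer x) : ∃ y, ν {y} ≠ 0 := by
  obtain ⟨p, hp1, T0, hT0⟩ := hper
  obtain ⟨T, hT⟩ : ∃ T : ℕ, ∀ j : ℤ, T ≤ j → x (j + p) = x j :=
    ⟨T0.toNat, fun j hj => hT0 j (by omega)⟩
  have hmul : ∀ q : ℕ, ∀ j : ℤ, T ≤ j → x (j + q * p) = x j := by
    intro q
    induction q with
    | zero => simp
    | succ q ih =>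
      intro j hj
      rw [← ih j hj, ← hT (j + q * p) (by nlinarith [mul_nonneg (Int.natCast_nonneg q) (Int.natCast_nonneg p)])]
      congr 1; push_cast; ring
  set y : ℤ → A := fun i => x (T + i % p) with hy
  have hpz : (0 : ℤ) < p := by omega
  have hxy : ∀ (q : ℕ) (i : ℤ), 0 ≤ i + q * p → x (i + (T + q * p : ℕ)) = y i := by
    intro q i hi
    have hdiv := Int.emod_add_mul_ediv i p
    have hmod := Int.emod_nonneg i hpz.ne'
    have hge : 0 ≤ i / p + q := by
      have : 0 ≤ (i + q * p) / p := Int.ediv_nonneg hi hpz.le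
      rwa [Int.add_mul_ediv_right _ _ hpz.ne'] at this
    have := hmul (i / p + q).toNat (T + i % p) (by omega)
    rw [Int.toNat_of_nonneg hge] at this
    rw [hy]
    simp only
    rw [← this]
    congr 1
    push_cast
    linear_combination -hdiv
  have hcyl : ∀ M : ℕ, 1 / (2 * p : ℝ) ≤ ν.real (cyl (Finset.Icc (-(M : ℤ)) M) y) := by
    intro M
    have hf := freq hx (Finset.Icc (-(M : ℤ)) M) y
    have hsub : Tendsto (fun Q : ℕ => T + p * Q) atTop atTop :=
      tendsto_atTop_mono (fun Q => by simp only [id]; nlinarith) tendsto_id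
    refine ge_of_tendsto (hf.comp hsub) ?_
    filter_upwards [eventually_ge_atTop (T + 2 * M + 1)] with Q hQ
    have hcount : ((Q - M : ℕ) : ℝ) ≤
        ∑ n ∈ Finset.range (T + p * Q), cc (Finset.Icc (-(M : ℤ)) M) y x n := by
      have himg : (Finset.Ico M Q).image (fun q => T + q * p) ⊆ Finset.range (T + p * Q) := by
        intro j hj
        simp only [Finset.mem_image, Finset.mem_Ico, Finset.mem_range] at hj ⊢
        obtain ⟨q, ⟨_, h2⟩, rfl⟩ := hj
        nlinarith
      have hnn : ∀ n : ℕ, 0 ≤ cc (Finset.Icc (-(M : ℤ)) M) y x n := by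
        intro n; unfold cc; split_ifs <;> norm_num
      refine le_trans ?_ (Finset.sum_le_sum_of_subset_of_nonneg himg fun n _ _ => hnn n)
      rw [Finset.sum_image (by
        intro a _ b _ h
        simp only [add_right_inj] at h
        exact Nat.eq_of_mul_eq_mul_right (by omega) h)]
      have h1 : ∀ q ∈ Finset.Ico M Q,
          cc (Finset.Icc (-(M : ℤ)) M) y x ((T + q * p : ℕ) : ℤ) = 1 := by
        intro q hq
        rw [Finset.mem_Ico] at hq
        unfold cc
        rw [if_pos]
        intro i hi
        rw [Finset.mem_Icc] at hi
        apply hxy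
        have : (M : ℤ) ≤ q * p := by
          have : M ≤ q * p := by nlinarith
          exact_mod_cast this
        omega
      rw [Finset.sum_congr rfl h1]
      simp
    have hpr : (1 : ℝ) ≤ p := by exact_mod_cast hp1
    have hQr : (T : ℝ) + 2 * M + 1 ≤ Q := by exact_mod_cast hQ
    have hTr : (0 : ℝ) ≤ T := Nat.cast_nonneg _
    have hMr : (0 : ℝ) ≤ M := Nat.cast_nonneg _
    rw [Nat.cast_sub (by omega)] at hcount
    simp only [Function.comp]
    rw [div_le_div_iff₀ (by positivity) (by push_cast; nlinarith)]
    push_cast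
    nlinarith
  refine ⟨y, fun h0 => ?_⟩
  have hInter : {y} = ⋂ M : ℕ, cyl (Finset.Icc (-(M : ℤ)) M) y := by
    ext z
    simp only [Set.mem_singleton_iff, Set.mem_iInter]
    constructor
    · rintro rfl M i _; rfl
    · intro h
      funext i
      exact h i.natAbs i (by rw [Finset.mem_Icc]; omega)
  have hanti : Antitone (fun M : ℕ => cyl (Finset.Icc (-(M : ℤ)) M) y) := by
    intro M M' hMM z hz i hi
    apply hz
    rw [Finset.mem_Icc] at hi ⊢
    omega
  have ht := tendsto_measure_iInter_atTop (μ := ν)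
    (fun M : ℕ => (meas_cyl (Finset.Icc (-(M : ℤ)) M) y).nullMeasurableSet)
    hanti ⟨0, measure_ne_top _ _⟩
  rw [← hInter, h0] at ht
  have ht2 := (ENNReal.tendsto_toReal ENNReal.zero_ne_top).comp ht
  have := ge_of_tendsto ht2 (Eventually.of_forall hcyl)
  have hpr : (1 : ℝ) ≤ p := by exact_mod_cast hp1
  have h2 : 0 < 1 / (2 * p : ℝ) := by positivity
  rw [ENNReal.toReal_zero] at this
  linarith

end MeasurePart

/-- If `limsup P_X(n)/n < k` and `X` has a generic measure with a generic point whose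
orbit closure is not uniquely ergodic, then `X` has at most `k-2` distinct nonatomic
generic measures (i.e. there is no family of `k-1` distinct ones). -/
theorem at_most_k_sub_two_generic_measures
    {A : Type*} [Fintype A] [TopologicalSpace A] [DiscreteTopology A]
    [MeasurableSpace A] [BorelSpace A]
    (X : Set (ℤ → A)) (hX : IsSubshift X) (k : ℕ)
    (hcomp : limsup (fun n : ℕ => (complexity X n : ℝ≥0∞) / (n : ℝ≥0∞)) atTop < (k : ℝ≥0∞))
    (μ : Measure (ℤ → A)) (hμ : IsProbabilityMeasure μ) (hμX : μ X = 1)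
    (xμ : ℤ → A) (hxμ : xμ ∈ X) (hgenpt : IsGenericPt μ xμ)
    (hnue : ¬ UniquelyErgodicOn (orbitClosure xμ)) :
    ¬ ∃ ν : Fin (k - 1) → Measure (ℤ → A), Function.Injective ν ∧
        ∀ i, (∀ y, ν i {y} = 0) ∧ GenericMeasureOn X (ν i) := by
  rintro ⟨ν, hinj, hν⟩
  -- arithmetic of the complexity
  have hk : 1 ≤ k := by
    rcases Nat.eq_zero_or_pos k with h | h
    · subst h; simp at hcomp
    · exact h
  obtain ⟨c, hck, hc⟩ : ∃ c : ℝ, c < k ∧ ∀ᶠ n : ℕ in atTop, (complexity X n : ℝ) ≤ c * n := by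
    obtain ⟨c, h1, h2⟩ := exists_between hcomp
    have hct : c ≠ ⊤ := h2.ne_top
    refine ⟨c.toReal, ?_, ?_⟩
    · have := (ENNReal.toReal_lt_toReal hct (ENNReal.natCast_ne_top k)).2 h2
      simpa using this
    · filter_upwards [eventually_lt_of_limsup_lt h1, eventually_gt_atTop 0] with n hn hn0
      have h3 : (complexity X n : ℝ≥0∞) ≤ c * n := by
        rw [← ENNReal.div_le_iff_le_mul]
        · exact hn.le
        · left; exact_mod_cast hn0.ne'
        · left; exact ENNReal.natCast_ne_top n
      have h4 := ENNReal.toReal_mono (ENNReal.mul_ne_top hct (ENNReal.natCast_ne_top n)) h3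
      simpa using h4
  have hkn : ∀ᶠ n : ℕ in atTop, complexity X n ≤ k * n := by
    filter_upwards [hc] with n hn
    have : (complexity X n : ℝ) ≤ k * n := hn.trans
      (mul_le_mul_of_nonneg_right hck.le (Nat.cast_nonneg n))
    exact_mod_cast this
  obtain ⟨R, hR⟩ : ∃ R : ℕ, (k : ℝ) / (k - c) < R := exists_nat_gt _
  have hkc : 0 < (k : ℝ) - c := by linarith
  rw [div_lt_iff₀ hkc] at hR
  have hR1 : 1 ≤ R := by
    rcases Nat.eq_zero_or_pos R with h | h
    · subst h
      have : (0 : ℝ) ≤ k := Nat.cast_nonneg k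
      simp at hR
      linarith
    · exact h
  have hDex : ∀ᶠ N : ℕ in atTop, ∃ n, complexity X (n + 1) ≤ complexity X n + (k - 1) ∧
      N ≤ n ∧ n ≤ R * N := by
    obtain ⟨N0, hN0⟩ := eventually_atTop.1 hc
    filter_upwards [eventually_ge_atTop N0, eventually_gt_atTop 0] with N hN hNp
    by_contra hcon
    push Not at hcon
    have hgrow : ∀ j, N + j ≤ R * N → k * j ≤ complexity X (N + j) := by
      intro j
      induction j with
      | zero => simp
      | succ j ih =>
        intro hj
        have h1 := ih (by omega)
        have h2 : complexity X (N + j) + (k - 1) < complexity X (N + j + 1) := by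
          by_contra h3
          push Not at h3
          have := hcon (N + j) h3 (by omega)
          omega
        rw [← add_assoc, mul_add]
        omega
    have hle : N ≤ R * N := by nlinarith
    have h1 := hgrow (R * N - N) (by omega)
    have e : N + (R * N - N) = R * N := by omega
    rw [e] at h1
    have h2 := hN0 (R * N) (by omega)
    have h3 : ((k * (R * N - N) : ℕ) : ℝ) ≤ c * ((R * N : ℕ) : ℝ) := le_trans (by exact_mod_cast h1) h2
    rw [Nat.cast_mul, Nat.cast_sub hle] at h3
    push_cast at h3
    have hNr : (0 : ℝ) < N := by exact_mod_cast hNp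
    nlinarith [mul_lt_mul_of_pos_right hR hNr]
  -- generic points
  have hνp : ∀ i, IsProbabilityMeasure (ν i) := fun i => (hν i).2.1
  choose y hyX hyg using fun i => (hν i).2.2.2
  have hyne : ∀ i, ¬ EvPer (y i) := by
    intro i h
    obtain ⟨z, hz⟩ := atomic (hyg i) h
    exact hz ((hν i).1 z)
  set KK : ℕ := 3 * k + 4 * k * R with hKK
  have E1 : ∀ᶠ n : ℕ in atTop, ∀ i, ∃ a : ℕ, a ≤ k * n ∧ ∃ b : ℤ,
      word (y i) n a = word (y i) n b ∧ y i (a + n) ≠ y i (b + n) := by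
    filter_upwards [hkn, eventually_gt_atTop 0] with n hn hn0 i
    exact right_special (hyX i) (hyne i) n _ hn0 hn
  have E2 : ∀ᶠ n : ℕ in atTop, ∀ i, ∃ a : ℕ, a ≤ k * n ∧ ∃ b : ℤ,
      word (y i) n a = word (y i) n b ∧ y i (a - 1) ≠ y i (b - 1) :=
    eventually_all.2 fun i => left_special (hyX i) (hyne i) k hkn
  have E3 : ∀ᶠ n : ℕ in atTop, ∀ i j, i ≠ j →
      ∀ s t : ℕ, s ≤ KK * n → t ≤ KK * n → word (y i) n s ≠ word (y j) n t := by
    refine eventually_all.2 fun i => eventually_all.2 fun j => ?_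
    by_cases h : i = j
    · exact Eventually.of_forall fun n h' => absurd h h'
    · exact (sep (hyg i) (hyg j) (fun h' => h (hinj h')) KK).mono fun n hn _ => hn
  have E4 : ∀ᶠ n : ℕ in atTop, ∀ i, ν i ≠ μ →
      ∀ s t : ℕ, s ≤ KK * n → t ≤ KK * n → word (y i) n s ≠ word xμ n t := by
    refine eventually_all.2 fun i => ?_
    by_cases h : ν i = μ
    · exact Eventually.of_forall fun n h' => absurd h h'
    · exact (sep (hyg i) hgenpt h KK).mono fun n hn _ => hn
  have E5 := bad hgenpt hnue KK
  have hkK : ∀ n, k * n ≤ KK * n := fun n => Nat.mul_le_mul_right n (by omega)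
  -- consequences at lengths with small growth
  have FR : ∀ᶠ n : ℕ in atTop, complexity X (n + 1) ≤ complexity X n + (k - 1) →
      (∀ a b : ℤ, ∀ s : ℕ, s ≤ KK * n → word xμ n a = word xμ n s → word xμ n a = word xμ n b →
        xμ (a + n) ≠ xμ (b + n) →
        ∀ a' b' : ℤ, ∀ s' : ℕ, s' ≤ KK * n → word xμ n a' = word xμ n s' →
        word xμ n a' = word xμ n b' → xμ (a' + n) ≠ xμ (b' + n) → word xμ n a = word xμ n a') ∧
      (∀ a' b' c', word xμ n a' = word xμ n b' → word xμ n a' = word xμ n c' →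
      xμ (a' + n) = xμ (b' + n) ∨ xμ (a' + n) = xμ (c' + n) ∨ xμ (b' + n) = xμ (c' + n)) := by
    filter_upwards [E1, E3, E4] with n h1 h3 h4 hD
    choose a ha b hab hab' using h1
    obtain ⟨c1, c2⟩ := count_right X n (k - 1) hD y hyX (fun i => (a i : ℤ)) b
      (fun i => ⟨hab i, hab' i⟩)
      (by
        intro i j h
        by_contra hij
        exact h3 i j hij (a i) (a j) ((ha i).trans (hkK n)) ((ha j).trans (hkK n)) h) xμ hxμ
    refine ⟨?_, c2⟩
    have key : ∀ a' b' : ℤ, ∀ s' : ℕ, s' ≤ KK * n → word xμ n a' = word xμ n s' →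
        word xμ n a' = word xμ n b' → xμ (a' + n) ≠ xμ (b' + n) →
        ∃ i, ν i = μ ∧ word (y i) n (a i) = word xμ n a' := by
      intro a' b' s' hs' hw hw' hne
      obtain ⟨i, hi⟩ := c1 a' b' hw' hne
      refine ⟨i, ?_, hi⟩
      by_contra hne'
      exact h4 i hne' (a i) s' ((ha i).trans (hkK n)) hs' (hi.trans hw)
    intro a1 b1 s1 p1 p2 p3 p4 a2 b2 s2 q1 q2 q3 q4
    obtain ⟨i, hi, hi'⟩ := key a1 b1 s1 p1 p2 p3 p4
    obtain ⟨j, hj, hj'⟩ := key a2 b2 s2 q1 q2 q3 q4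
    have : i = j := hinj (hi.trans hj.symm)
    subst this
    rw [← hi', ← hj']
  have FL0 : ∀ᶠ n : ℕ in atTop, complexity X (n + 1) ≤ complexity X n + (k - 1) →
      ∃ a : Fin (k - 1) → ℕ,
      (∀ a' b' : ℤ, ∀ s' : ℕ, s' ≤ KK * n → word xμ n a' = word xμ n s' →
        word xμ n a' = word xμ n b' → xμ (a' - 1) ≠ xμ (b' - 1) →
        ∃ i, ν i = μ ∧ word (y i) n (a i) = word xμ n a') ∧
      (∀ a' b' c', word xμ n a' = word xμ n b' → word xμ n a' = word xμ n c' →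
      xμ (a' - 1) = xμ (b' - 1) ∨ xμ (a' - 1) = xμ (c' - 1) ∨ xμ (b' - 1) = xμ (c' - 1)) := by
    filter_upwards [E2, E3, E4] with n h1 h3 h4 hD
    choose a ha b hab hab' using h1
    obtain ⟨c1, c2⟩ := count_left X n (k - 1) hD y hyX (fun i => (a i : ℤ)) b
      (fun i => ⟨hab i, hab' i⟩)
      (by
        intro i j h
        by_contra hij
        exact h3 i j hij (a i) (a j) ((ha i).trans (hkK n)) ((ha j).trans (hkK n)) h) xμ hxμ
    refine ⟨a, ?_, c2⟩
    intro a' b' s' hs' hw hw' hne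
    obtain ⟨i, hi⟩ := c1 a' b' hw' hne
    refine ⟨i, ?_, hi⟩
    by_contra hne'
    exact h4 i hne' (a i) s' ((ha i).trans (hkK n)) hs' (hi.trans hw)
  by_cases hev : EvPer xμ
  · -- `xμ` is eventually periodic to the right
    obtain ⟨p, hp1, T, hT⟩ := id hev
    by_cases hall : ∀ j, xμ (j + p) = xμ j
    · obtain ⟨n, ⟨t, ht⟩, hnp⟩ := (E5.and (eventually_ge_atTop p)).exists
      have hper : Function.Periodic xμ (p : ℤ) := hall
      have hpz : (0 : ℤ) < p := by omega
      have hmod := Int.emod_nonneg t hpz.ne'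
      have hlt := Int.emod_lt_of_pos t hpz
      have hdiv := Int.emod_add_mul_ediv t p
      apply ht (t % p).toNat
      · have : n ≤ KK * n := le_trans (Nat.le_mul_of_pos_left n hk) (hkK n)
        omega
      · rw [Int.toNat_of_nonneg hmod, word_eq_iff]
        intro j _
        rw [← hper.int_mul (t / p) (t % p + j)]
        congr 1
        push_cast
        linear_combination -hdiv
    · push Not at hall
      obtain ⟨j0, hj0, hmax⟩ := Int.exists_greatest_of_bdd (P := fun j => xμ (j + p) ≠ xμ j)
        ⟨T, fun z hz => by
          by_contra h
          exact hz (hT z (by omega))⟩ hall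
      have hge : ∀ j, j0 + 1 ≤ j → xμ (j + p) = xμ j := by
        intro j hj
        by_contra h
        have := hmax j h
        omega
      have hmul : ∀ q : ℕ, ∀ j : ℤ, j0 + 1 ≤ j → xμ (j + q * p) = xμ j := by
        intro q
        induction q with
        | zero => simp
        | succ q ih =>
          intro j hj
          rw [← ih j hj, ← hge (j + q * p)
            (by nlinarith [mul_nonneg (Int.natCast_nonneg q) (Int.natCast_nonneg p)])]
          congr 1; push_cast; ring
      set q : ℕ := (j0 + 1).natAbs with hq
      set s : ℕ := (j0 + 1 + q * p).toNat with hs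
      have hqp : (q : ℤ) ≤ q * p := by
        have : (1 : ℤ) ≤ p := by omega
        nlinarith [mul_le_mul_of_nonneg_left this (Int.natCast_nonneg q)]
      have hs' : (s : ℤ) = j0 + 1 + q * p := by
        rw [hs, Int.toNat_of_nonneg]; omega
      obtain ⟨N, hN⟩ := eventually_atTop.1 (FL0.and (eventually_ge_atTop s))
      obtain ⟨N', hN'⟩ := eventually_atTop.1 hDex
      obtain ⟨n, hD, hn, -⟩ := hN' (max N N') (le_max_right _ _)
      obtain ⟨hF, hsn⟩ := hN n ((le_max_left _ _).trans hn)
      obtain ⟨a, hF, -⟩ := hF hD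
      have : n ≤ KK * n := le_trans (Nat.le_mul_of_pos_left n hk) (hkK n)
      obtain ⟨i, hi, -⟩ := hF (j0 + 1) (j0 + 1 + p) s (by omega)
        (by
          rw [word_eq_iff, hs']
          intro t _
          rw [← hmul q (j0 + 1 + t) (by omega)]
          congr 1; ring)
        (by
          rw [word_eq_iff]
          intro t _
          rw [← hge (j0 + 1 + t) (by omega)]
          congr 1; ring)
        (by
          intro h
          apply hj0
          have e1 : j0 + 1 - 1 = j0 := by ring
          have e2 : j0 + 1 + p - 1 = j0 + p := by ring
          rw [e1, e2] at h
          exact h.symm)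
      obtain ⟨z, hz⟩ := atomic hgenpt hev
      rw [← hi] at hz
      exact hz ((hν i).1 z)
  · -- `xμ` is not eventually periodic
    apply hev
    obtain ⟨N, hN⟩ := eventually_atTop.1 (FR.and (FL0.and (E5.and (hkn.and
      (hDex.and (eventually_gt_atTop 0))))))
    refine chain k R N hR1 (fun n => complexity X (n + 1) ≤ complexity X n + (k - 1))
      (fun n hn => (hN n hn).2.2.2.2.1) ?_
    intro n hn hD
    obtain ⟨hFR, hFL, ⟨t0, ht0⟩, hQ, -, hn0⟩ := hN n hn
    obtain ⟨r1, r2⟩ := hFR hD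
    obtain ⟨a, l1, l2⟩ := hFL hD
    set H : ℕ := (2 * k + 4 * k * R) * n with hH
    have hHQ : H + k * n = KK * n := by rw [hH, hKK]; ring
    have hHe : H = k * n + (k + 4 * k * R) * n := by rw [hH]; ring
    have hw : ∀ {a b : ℕ}, word xμ n a = word xμ n b →
        word xμ n ((a + 1 : ℕ) : ℤ) ≠ word xμ n ((b + 1 : ℕ) : ℤ) → xμ (a + n) ≠ xμ (b + n) := by
      intro a b h h' h2
      apply h'
      push_cast
      exact (word_succ_right h).2 (Or.inr h2)
    have hv : ∀ {a b : ℕ}, word xμ n (((KK * n : ℕ) : ℤ) - a) = word xμ n (((KK * n : ℕ) : ℤ) - b) →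
        word xμ n (((KK * n : ℕ) : ℤ) - (a + 1 : ℕ)) ≠ word xμ n (((KK * n : ℕ) : ℤ) - (b + 1 : ℕ)) →
        xμ (((KK * n : ℕ) : ℤ) - a - 1) ≠ xμ (((KK * n : ℕ) : ℤ) - b - 1) := by
      intro a b h h' h2
      apply h'
      have := word_pred_left h h2
      rw [Nat.cast_succ, Nat.cast_succ, ← sub_sub, ← sub_sub]
      exact this
    have fwd := abs2 (fun t : ℕ => word xμ n t) (k * n) H
      (fun o => by
        obtain ⟨s, t, h1, h2, h3⟩ := pig hxμ n _ hQ (fun t => ((o + t : ℕ) : ℤ))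
        exact ⟨s, t, h1, h2, h3⟩)
      (fun a ha a' ha' b b' e1 e2 e3 e4 =>
        r1 a b a (by omega) rfl e1 (hw e1 e2) a' b' a' (by omega) rfl e3 (hw e3 e4))
      (by
        intro a ha b c e1 e2
        by_contra hcon
        push Not at hcon
        obtain ⟨g1, g2, g3⟩ := hcon
        rcases r2 a b c e1 e2 with h | h | h
        · exact hw e1 g1 h
        · exact hw e2 g2 h
        · exact hw (e1.symm.trans e2) g3 h)
    have bwd := abs2 (fun t : ℕ => word xμ n (((KK * n : ℕ) : ℤ) - t)) (k * n) H
      (fun o => by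
        obtain ⟨s, t, h1, h2, h3⟩ := pig hxμ n _ hQ (fun t => ((KK * n : ℕ) : ℤ) - ((o + t : ℕ) : ℤ))
        exact ⟨s, t, h1, h2, h3⟩)
      (by
        intro a1 ha a' ha' b b' e1 e2 e3 e4
        obtain ⟨i, hi, hi'⟩ := l1 (((KK * n : ℕ) : ℤ) - a1) (((KK * n : ℕ) : ℤ) - b) (KK * n - a1)
          (by omega) (by rw [Nat.cast_sub (by omega)]) e1 (hv e1 e2)
        obtain ⟨j, hj, hj'⟩ := l1 (((KK * n : ℕ) : ℤ) - a') (((KK * n : ℕ) : ℤ) - b') (KK * n - a')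
          (by omega) (by rw [Nat.cast_sub (by omega)]) e3 (hv e3 e4)
        have : i = j := hinj (hi.trans hj.symm)
        subst this
        exact hi'.symm.trans hj')
      (by
        intro a ha b c e1 e2
        by_contra hcon
        push Not at hcon
        obtain ⟨g1, g2, g3⟩ := hcon
        rcases l2 _ _ _ e1 e2 with h | h | h
        · exact hv e1 g1 h
        · exact hv e2 g2 h
        · exact hv (e1.symm.trans e2) g3 h)
    rcases fwd with fwd | ⟨p, hp1, hp2, hp⟩
    · rcases bwd with bwd | ⟨p, hp1, hp2, hp⟩
      · exfalso
        by_cases h0 : 0 ≤ t0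
        · obtain ⟨s, hs, he⟩ := fwd t0.toNat
          simp only [Int.toNat_of_nonneg h0] at he
          exact ht0 s (by omega) he
        · obtain ⟨s, hs, he⟩ := bwd (((KK * n : ℕ) : ℤ) - t0).toNat
          have e : ((((KK * n : ℕ) : ℤ) - t0).toNat : ℤ) = ((KK * n : ℕ) : ℤ) - t0 := by omega
          simp only [e, sub_sub_cancel] at he
          refine ht0 (KK * n - s) (by omega) ?_
          rw [Nat.cast_sub (by omega)]
          exact he
      · refine ⟨p, hp1, hp2, fun i h1 h2 => ?_⟩
        have := word_first hn0 (hp (KK * n - i - p) (by omega) (by omega))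
        have e1 : (((KK * n : ℕ) : ℤ) - (KK * n - i - p + p : ℕ)) = i := by omega
        have e2 : (((KK * n : ℕ) : ℤ) - (KK * n - i - p : ℕ)) = i + p := by omega
        rw [e1, e2] at this
        exact this.symm
    · refine ⟨p, hp1, hp2, fun i h1 h2 => ?_⟩
      have := word_first hn0 (hp i h1 (by omega))
      push_cast at this
      exact this
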